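/- Let D < N < 2D be positive integers such that N−D divides D(N−1) and Q := D(N−1)/(N−D) is a prime power. If an ETF(D,N) exists in ℂ^D, then for every integer J ≥ 1 there exists an ETF(D^{(J)}, N^{(J)}) in ℂ^{D^{(J)}}, where D^{(J)} = D·Q^{J−1} and N^{(J)} = N·(Q^J−1)/(Q−1). -/

import Mathlib

open scoped BigOperators

/-- A family `(φ n)` of vectors is an equiangular tight frame `ETF(D,N)`. -/
def IsETF {ι E : Type*} [Fintype ι] [NormedAddCommGroup E] [InnerProductSpace ℂ E]
    (D N : ℕ) (φ : ι → E) : Prop :=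
  (∀ n, ‖φ n‖ = 1) ∧
  (∀ n n', n ≠ n' →
    ‖(inner ℂ (φ n) (φ n') : ℂ)‖ ^ 2 = ((N : ℝ) - D) / (D * ((N : ℝ) - 1))) ∧
  (∀ y : E, ∑ n, (inner ℂ (φ n) y : ℂ) • φ n = ((N : ℂ) / (D : ℂ)) • y)

set_option linter.unusedSectionVars false

section chars
variable {F E : Type} [Field F] [Fintype F] [Field E] [Fintype E] [Algebra F E]

lemma norm_gaussSum_sq {χ : MulChar E ℂ} (hχ : χ ≠ 1) {ψ : AddChar E ℂ} (hψ : ψ.IsPrimitive) :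
    ‖gaussSum χ ψ‖ ^ 2 = Fintype.card E := by
  have h := gaussSum_mul_gaussSum_eq_card hχ hψ
  rw [← star_gaussSum_eq] at h
  have h2 : (gaussSum χ ψ) * star (gaussSum χ ψ) = ((‖gaussSum χ ψ‖ ^ 2 : ℝ) : ℂ) := by
    have := Complex.mul_conj' (gaussSum χ ψ)
    push_cast
    exact this
  rw [h2] at h
  exact_mod_cast h

/-- restriction of a multiplicative character to a subfield -/
noncomputable def resChar (χ : MulChar E ℂ) : MulChar F ℂ where
  toFun c := χ (algebraMap F E c)
  map_one' := by simp
  map_mul' := by simp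
  map_nonunit' a ha := by
    have : a = 0 := by simpa using ha
    subst this
    simp [MulChar.map_zero]

lemma resChar_apply (χ : MulChar E ℂ) (c : F) :
    (resChar χ : MulChar F ℂ) c = χ (algebraMap F E c) := rfl

variable [DecidableEq F] [DecidableEq E]

lemma fiber_sum (ℓ : E →ₗ[F] F) (χ : MulChar E ℂ) (c : F) (hc : c ≠ 0) :
    ∑ x ∈ Finset.univ.filter (fun x => ℓ x = c), χ x =
      χ (algebraMap F E c) * ∑ x ∈ Finset.univ.filter (fun x => ℓ x = 1), χ x := by
  rw [Finset.mul_sum]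
  symm
  refine Finset.sum_bij' (fun x _ => c • x) (fun x _ => c⁻¹ • x) ?_ ?_ ?_ ?_ ?_
  · intro x hx; simp at hx ⊢; simp [hx]
  · intro x hx; simp at hx ⊢; simp [hx, hc]
  · intro x hx; simp [smul_smul, hc]
  · intro x hx; simp [smul_smul, hc]
  · intro x hx; simp [Algebra.smul_def]

lemma fiber_zero (ℓ : E →ₗ[F] F) (χ : MulChar E ℂ) (c : F) (hc : c ≠ 0)
    (hχ : χ (algebraMap F E c) ≠ 1) :
    ∑ x ∈ Finset.univ.filter (fun x => ℓ x = 0), χ x = 0 := by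
  have h : ∑ x ∈ Finset.univ.filter (fun x => ℓ x = 0), χ x =
      χ (algebraMap F E c) * ∑ x ∈ Finset.univ.filter (fun x => ℓ x = 0), χ x := by
    conv_rhs => rw [Finset.mul_sum]
    symm
    refine Finset.sum_bij' (fun x _ => c • x) (fun x _ => c⁻¹ • x) ?_ ?_ ?_ ?_ ?_
    · intro x hx; simp at hx ⊢; simp [hx]
    · intro x hx; simp at hx ⊢; simp [hx]
    · intro x hx; simp [smul_smul, hc]
    · intro x hx; simp [smul_smul, hc]
    · intro x hx; simp [Algebra.smul_def]
  have h2 : (χ (algebraMap F E c) - 1) *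
      ∑ x ∈ Finset.univ.filter (fun x => ℓ x = 0), χ x = 0 := by linear_combination -h
  rcases mul_eq_zero.1 h2 with h3 | h3
  · exact absurd (sub_eq_zero.1 h3) hχ
  · exact h3

lemma fiber_card (ℓ : E →ₗ[F] F) (hℓ : ∀ c, ℓ (algebraMap F E c) = c) :
    (Finset.univ.filter (fun x => ℓ x = 1)).card * Fintype.card F = Fintype.card E := by
  have h := Finset.card_eq_sum_card_fiberwise (f := ℓ) (s := Finset.univ) (t := Finset.univ)
    (by intro x _; simp)
  have h2 : ∀ c : F, (Finset.univ.filter (fun x => ℓ x = c)).card =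
      (Finset.univ.filter (fun x => ℓ x = 1)).card := by
    intro c
    refine Finset.card_bij' (fun x _ => x + algebraMap F E (1 - c))
      (fun x _ => x - algebraMap F E (1 - c)) ?_ ?_ ?_ ?_
    · intro x hx
      simp only [Finset.mem_filter, Finset.mem_univ, true_and] at hx ⊢
      rw [map_add, hℓ, hx]; ring
    · intro x hx
      simp only [Finset.mem_filter, Finset.mem_univ, true_and] at hx ⊢
      rw [map_sub, hℓ, hx]; ring
    · intro x hx; simp
    · intro x hx; simp
  rw [Finset.sum_congr rfl (fun c _ => h2 c)] at h
  rw [Finset.sum_const, Finset.card_univ, Finset.card_univ] at h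
  rw [h, smul_eq_mul, mul_comm]

/-- pullback of an additive character along a functional -/
noncomputable def pullAdd (ℓ : E →ₗ[F] F) (ψ : AddChar F ℂ) : AddChar E ℂ :=
  ψ.compAddMonoidHom ℓ.toAddMonoidHom

lemma pullAdd_prim (ℓ : E →ₗ[F] F) (hℓ : ∀ c, ℓ (algebraMap F E c) = c)
    (ψ : AddChar F ℂ) (hψ : ψ ≠ 1) : (pullAdd ℓ ψ).IsPrimitive := by
  apply AddChar.IsPrimitive.of_ne_one
  obtain ⟨a, ha⟩ := AddChar.ne_one_iff.1 hψ
  refine AddChar.ne_one_iff.2 ⟨algebraMap F E a, ?_⟩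
  simpa [pullAdd, hℓ] using ha

lemma gauss_fiber (ℓ : E →ₗ[F] F) (ψ : AddChar F ℂ) (χ : MulChar E ℂ) :
    gaussSum χ (pullAdd ℓ ψ) =
      ∑ x ∈ Finset.univ.filter (fun x => ℓ x = 0), χ x +
      (∑ x ∈ Finset.univ.filter (fun x => ℓ x = 1), χ x) *
        ∑ c ∈ Finset.univ.erase (0 : F), χ (algebraMap F E c) * ψ c := by
  have h : gaussSum χ (pullAdd ℓ ψ) =
      ∑ c : F, ∑ x ∈ Finset.univ.filter (fun x => ℓ x = c), χ x * ψ c := by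
    unfold gaussSum
    rw [← Finset.sum_fiberwise Finset.univ (fun x => ℓ x)]
    refine Finset.sum_congr rfl fun c _ => Finset.sum_congr rfl fun x hx => ?_
    have : ℓ x = c := by simpa using hx
    simp [pullAdd, this]
  rw [h, ← Finset.add_sum_erase _ _ (Finset.mem_univ (0 : F))]
  congr 1
  · simp
  · rw [Finset.mul_sum]
    refine Finset.sum_congr rfl fun c hc => ?_
    rw [← Finset.sum_mul, fiber_sum ℓ χ c (Finset.ne_of_mem_erase hc)]
    ring

lemma norm_nontriv (ℓ : E →ₗ[F] F) (hℓ : ∀ c, ℓ (algebraMap F E c) = c)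
    (χ : MulChar E ℂ) (c : F) (hc : c ≠ 0) (hχ : χ (algebraMap F E c) ≠ 1) :
    ‖∑ x ∈ Finset.univ.filter (fun x => ℓ x = 1), χ x‖ ^ 2 * Fintype.card F
      = Fintype.card E := by
  obtain ⟨ψ, hψ⟩ : ∃ ψ : AddChar F ℂ, ψ.IsPrimitive :=
    ⟨_, AddChar.FiniteField.primitiveChar_to_Complex_isPrimitive F⟩
  have hψ1 : ψ ≠ 1 := by
    intro h
    apply hψ (one_ne_zero)
    ext x
    simp [h]
  have hcE : algebraMap F E c ≠ 0 := by simpa using hc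
  have hχ1 : χ ≠ 1 := by
    rintro rfl
    exact hχ (MulChar.one_apply (isUnit_iff_ne_zero.2 hcE))
  have hr1 : (resChar χ : MulChar F ℂ) ≠ 1 := by
    intro h
    apply hχ
    rw [← resChar_apply, h, MulChar.one_apply (isUnit_iff_ne_zero.2 hc)]
  have h1 := norm_gaussSum_sq hχ1 (pullAdd_prim ℓ hℓ ψ hψ1)
  have h2 := norm_gaussSum_sq hr1 hψ
  rw [gauss_fiber, fiber_zero ℓ χ c hc hχ, zero_add] at h1
  have h3 : ∑ c ∈ Finset.univ.erase (0 : F), χ (algebraMap F E c) * ψ c =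
      gaussSum (resChar χ : MulChar F ℂ) ψ := by
    unfold gaussSum
    rw [← Finset.add_sum_erase _ _ (Finset.mem_univ (0 : F))]
    simp [resChar_apply, MulChar.map_zero]
  rw [h3, norm_mul, mul_pow, h2] at h1
  exact h1

lemma norm_triv (ℓ : E →ₗ[F] F) (hℓ : ∀ c, ℓ (algebraMap F E c) = c)
    (χ : MulChar E ℂ) (hχ1 : χ ≠ 1) (hχ : ∀ c : F, c ≠ 0 → χ (algebraMap F E c) = 1) :
    ‖∑ x ∈ Finset.univ.filter (fun x => ℓ x = 1), χ x‖ ^ 2 * (Fintype.card F) ^ 2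
      = Fintype.card E := by
  obtain ⟨ψ, hψ⟩ : ∃ ψ : AddChar F ℂ, ψ.IsPrimitive :=
    ⟨_, AddChar.FiniteField.primitiveChar_to_Complex_isPrimitive F⟩
  have hψ1 : ψ ≠ 1 := by
    intro h
    apply hψ (one_ne_zero)
    ext x
    simp [h]
  have h1 := norm_gaussSum_sq hχ1 (pullAdd_prim ℓ hℓ ψ hψ1)
  have h0 : gaussSum χ (pullAdd ℓ (1 : AddChar F ℂ)) = 0 := by
    have := MulChar.sum_eq_zero_of_ne_one hχ1
    simpa [gaussSum, pullAdd] using this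
  rw [gauss_fiber] at h1 h0
  have e1 : ∑ c ∈ Finset.univ.erase (0 : F), χ (algebraMap F E c) * ψ c = -1 := by
    have hs := AddChar.sum_eq_zero_of_ne_one hψ1
    rw [← Finset.add_sum_erase _ _ (Finset.mem_univ (0 : F))] at hs
    rw [Finset.sum_congr rfl (g := fun c => ψ c)]
    · rw [AddChar.map_zero_eq_one] at hs
      linear_combination hs
    · intro c hc
      rw [hχ c (Finset.ne_of_mem_erase hc), one_mul]
  have e2 : ∑ c ∈ Finset.univ.erase (0 : F), χ (algebraMap F E c) * (1 : AddChar F ℂ) c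
      = (Fintype.card F : ℂ) - 1 := by
    rw [Finset.sum_congr rfl (g := fun c => (1 : ℂ))]
    · rw [Finset.sum_const, Finset.card_erase_of_mem (Finset.mem_univ _), Finset.card_univ]
      simp [Nat.cast_sub (Fintype.card_pos (α := F))]
    · intro c hc
      rw [hχ c (Finset.ne_of_mem_erase hc), one_mul, AddChar.one_apply]
  rw [e1] at h1
  rw [e2] at h0
  set S := ∑ x ∈ Finset.univ.filter (fun x => ℓ x = 1), χ x
  set T := ∑ x ∈ Finset.univ.filter (fun x => ℓ x = 0), χ x
  have : T + S * -1 = - (S * (Fintype.card F : ℂ)) := by linear_combination h0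
  rw [this, norm_neg, norm_mul, mul_pow] at h1
  simpa using h1

lemma mem_range_of_pow (z : E) (hz : z ≠ 0) (h : z ^ (Fintype.card F - 1) = 1) :
    ∃ c : F, algebraMap F E c = z := by
  have hQ : 1 < Fintype.card F := Fintype.one_lt_card
  have hle := IsCyclic.card_pow_eq_one_le (α := Eˣ) (n := Fintype.card F - 1) (by omega)
  have hsub : (Finset.univ : Finset Fˣ).image (Units.map (algebraMap F E : F →* E)) ⊆
      Finset.univ.filter (fun a : Eˣ => a ^ (Fintype.card F - 1) = 1) := by
    intro x hx
    obtain ⟨c, -, rfl⟩ := Finset.mem_image.1 hx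
    simp only [Finset.mem_filter, Finset.mem_univ, true_and]
    rw [← map_pow, ← Fintype.card_units, pow_card_eq_one, map_one]
  have heq := Finset.eq_of_subset_of_card_le hsub (by
    have hi : Function.Injective (Units.map (algebraMap F E : F →* E)) :=
      Units.map_injective (algebraMap F E).injective
    have hc := Finset.card_image_of_injective (Finset.univ : Finset Fˣ) hi
    rw [Finset.card_univ, Fintype.card_units] at hc
    exact hle.trans hc.ge)
  have hm : Units.mk0 z hz ∈ Finset.univ.filter (fun a : Eˣ => a ^ (Fintype.card F - 1) = 1) := by
    simp only [Finset.mem_filter, Finset.mem_univ, true_and]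
    ext; simpa using h
  rw [← heq] at hm
  obtain ⟨c, -, hc⟩ := Finset.mem_image.1 hm
  exact ⟨c, by simpa using congrArg Units.val hc⟩

end chars

section chars2
variable {F E : Type} [Field F] [Fintype F] [Field E] [Fintype E] [Algebra F E]
variable [DecidableEq F] [DecidableEq E]

lemma exists_inj_char (E : Type) [Field E] [Fintype E] [DecidableEq E] :
    ∃ χ : MulChar E ℂ, ∀ x y : Eˣ, χ x = χ y → x = y := by
  have hpos : Fintype.card Eˣ ≠ 0 := Fintype.card_ne_zero
  obtain ⟨χ, hχ⟩ := MulChar.exists_mulChar_orderOf_eq_card_units E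
    (Complex.isPrimitiveRoot_exp _ hpos)
  refine ⟨χ, ?_⟩
  have key : ∀ z : Eˣ, χ z = 1 → z = 1 := by
    intro z hz
    obtain ⟨g, hg⟩ := IsCyclic.exists_generator (α := Eˣ)
    obtain ⟨k, rfl⟩ := (mem_powers_iff_mem_zpowers.2 (hg z))
    have : χ ^ k = 1 := by
      rw [MulChar.eq_iff hg, MulChar.one_apply_coe, MulChar.pow_apply_coe]
      simpa using hz
    have h2 := orderOf_dvd_of_pow_eq_one this
    rw [hχ] at h2
    obtain ⟨t, rfl⟩ := h2
    simp only
    rw [pow_mul, pow_card_eq_one, one_pow]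
  intro x y h
  have : χ ((x * y⁻¹ : Eˣ) : E) = 1 := by
    rw [Units.val_mul, map_mul, h, ← map_mul, ← Units.val_mul, mul_inv_cancel]
    simp
  exact mul_inv_eq_one.1 (key _ this)

lemma pow_ne_of_inj {χ : MulChar E ℂ} (hχ : ∀ x y : Eˣ, χ x = χ y → x = y) {a b : ℕ}
    (ha : a < Fintype.card E - 1) (hb : b < Fintype.card E - 1) (hab : a ≠ b) :
    χ ^ a ≠ χ ^ b := by
  intro h
  obtain ⟨g, hg⟩ := IsCyclic.exists_ofOrder_eq_natCard (α := Eˣ)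
  have h1 : χ ((g ^ a : Eˣ) : E) = χ ((g ^ b : Eˣ) : E) := by
    have := congrArg (fun θ : MulChar E ℂ => θ g) h
    simpa [MulChar.pow_apply_coe] using this
  have h2 := hχ _ _ h1
  rw [pow_inj_mod, hg, Nat.card_eq_fintype_card, Fintype.card_units, Nat.mod_eq_of_lt ha,
    Nat.mod_eq_of_lt hb] at h2
  exact hab h2

lemma exists_res_ne {χ : MulChar E ℂ} (hχ : ∀ x y : Eˣ, χ x = χ y → x = y) {a b : ℕ}
    (hab : a % (Fintype.card F - 1) ≠ b % (Fintype.card F - 1)) :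
    ∃ c : F, c ≠ 0 ∧ χ (algebraMap F E c) ^ a ≠ χ (algebraMap F E c) ^ b := by
  obtain ⟨g, hg⟩ := IsCyclic.exists_ofOrder_eq_natCard (α := Fˣ)
  refine ⟨g, g.ne_zero, fun h => ?_⟩
  have hi : Function.Injective (Units.map (algebraMap F E : F →* E)) :=
    Units.map_injective (algebraMap F E).injective
  have h2 := hχ (Units.map (algebraMap F E : F →* E) (g ^ a))
    (Units.map (algebraMap F E : F →* E) (g ^ b)) (by simpa using h)
  have h3 := hi h2
  rw [pow_inj_mod, hg, Nat.card_eq_fintype_card, Fintype.card_units] at h3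
  exact hab h3

lemma ip_eq (χ : MulChar E ℂ) (a b : ℕ) (s : Finset E) (hs : ∀ x ∈ s, x ≠ 0) :
    ∑ x ∈ s, star (χ x ^ a) * χ x ^ b = ∑ x ∈ s, (χ ^ b * (χ ^ a)⁻¹) x := by
  refine Finset.sum_congr rfl fun x hx => ?_
  have h1 : ∀ k : ℕ, (χ ^ k) x = χ x ^ k := by
    intro k
    have := MulChar.pow_apply_coe χ k (Units.mk0 x (hs x hx))
    simpa using this
  rw [MulChar.mul_apply, ← MulChar.star_apply', h1, h1, mul_comm]

lemma theta_apply (χ : MulChar E ℂ) (a b : ℕ) (x : E) (hx : x ≠ 0) :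
    (χ ^ b * (χ ^ a)⁻¹) x = χ x ^ b * (χ x ^ a)⁻¹ := by
  have h1 : ∀ k : ℕ, (χ ^ k) x = χ x ^ k := by
    intro k
    have := MulChar.pow_apply_coe χ k (Units.mk0 x hx)
    simpa using this
  rw [MulChar.mul_apply, MulChar.inv_apply_eq_inv', h1, h1]

lemma chi_ne_zero (χ : MulChar E ℂ) (x : E) (hx : x ≠ 0) : χ x ≠ 0 := by
  have : IsUnit (χ x) := (isUnit_iff_ne_zero.2 hx).map χ
  exact this.ne_zero

lemma ip_diff (ℓ : E →ₗ[F] F) (hℓ : ∀ c, ℓ (algebraMap F E c) = c)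
    {χ : MulChar E ℂ} (hχ : ∀ x y : Eˣ, χ x = χ y → x = y) {a b : ℕ}
    (hab : a % (Fintype.card F - 1) ≠ b % (Fintype.card F - 1)) :
    ‖∑ x ∈ Finset.univ.filter (fun x => ℓ x = 1), star (χ x ^ a) * χ x ^ b‖ ^ 2
      * Fintype.card F = Fintype.card E := by
  rw [ip_eq]
  · obtain ⟨c, hc, hne⟩ := exists_res_ne hχ hab
    have hcE : algebraMap F E c ≠ 0 := by simpa using hc
    refine norm_nontriv ℓ hℓ _ c hc ?_
    rw [theta_apply _ _ _ _ hcE]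
    intro h
    have := pow_ne_zero a (chi_ne_zero χ _ hcE)
    rw [mul_inv_eq_one₀ this] at h
    exact hne h.symm
  · rintro x hx rfl
    simp at hx

lemma ip_same (ℓ : E →ₗ[F] F) (hℓ : ∀ c, ℓ (algebraMap F E c) = c)
    {χ : MulChar E ℂ} (hχ : ∀ x y : Eˣ, χ x = χ y → x = y) {n m m' : ℕ}
    (ha : n + (Fintype.card F - 1) * m < Fintype.card E - 1)
    (hb : n + (Fintype.card F - 1) * m' < Fintype.card E - 1) (hm : m ≠ m') :
    ‖∑ x ∈ Finset.univ.filter (fun x => ℓ x = 1),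
        star (χ x ^ (n + (Fintype.card F - 1) * m)) * χ x ^ (n + (Fintype.card F - 1) * m')‖ ^ 2
      * (Fintype.card F) ^ 2 = Fintype.card E := by
  have hQ : 1 < Fintype.card F := Fintype.one_lt_card
  rw [ip_eq]
  · refine norm_triv ℓ hℓ _ ?_ ?_
    · intro h
      rw [mul_inv_eq_one] at h
      refine pow_ne_of_inj hχ ha hb ?_ h.symm
      intro h2
      have h3 : (Fintype.card F - 1) * m = (Fintype.card F - 1) * m' := by omega
      exact hm (Nat.eq_of_mul_eq_mul_left (by omega) h3)
    · intro c hc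
      have hcE : algebraMap F E c ≠ 0 := by simpa using hc
      have h1 : χ (algebraMap F E c) ^ (Fintype.card F - 1) = 1 := by
        rw [← map_pow, ← map_pow, FiniteField.pow_card_sub_one_eq_one c hc]
        simp
      rw [theta_apply _ _ _ _ hcE, pow_add, pow_add, pow_mul, pow_mul, h1, one_pow, one_pow]
      have := pow_ne_zero n (chi_ne_zero χ _ hcE)
      field_simp
  · rintro x hx rfl
    simp at hx

lemma chi_star_mul (χ : MulChar E ℂ) (x : E) (hx : x ≠ 0) : χ x * star (χ x) = 1 := by
  rw [MulChar.star_apply', MulChar.inv_apply_eq_inv', mul_inv_cancel₀ (chi_ne_zero χ x hx)]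

lemma tight_core (ℓ : E →ₗ[F] F)
    {χ : MulChar E ℂ} (hχ : ∀ x y : Eˣ, χ x = χ y → x = y) (n M : ℕ)
    (hM : (Fintype.card F - 1) * M = Fintype.card E - 1) (r s : E) (hr : ℓ r = 1) (hs : ℓ s = 1) :
    ∑ m : Fin M, χ r ^ (n + (Fintype.card F - 1) * m) *
      star (χ s ^ (n + (Fintype.card F - 1) * m)) = if r = s then (M : ℂ) else 0 := by
  have hr0 : r ≠ 0 := by rintro rfl; simp at hr
  have hs0 : s ≠ 0 := by rintro rfl; simp at hs
  have h1 : ∀ m : ℕ, χ r ^ (n + (Fintype.card F - 1) * m) *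
      star (χ s ^ (n + (Fintype.card F - 1) * m)) =
      (χ r * star (χ s)) ^ n * ((χ r * star (χ s)) ^ (Fintype.card F - 1)) ^ m := by
    intro m
    rw [star_pow, ← mul_pow, pow_add, pow_mul]
  simp_rw [h1]
  rw [← Finset.mul_sum, Fin.sum_univ_eq_sum_range
    (fun m => ((χ r * star (χ s)) ^ (Fintype.card F - 1)) ^ m) M]
  split_ifs with h
  · subst h
    rw [chi_star_mul χ r hr0]
    simp
  · have hw : χ r * star (χ s) = χ (r * s⁻¹) := by
      rw [MulChar.star_apply', MulChar.inv_apply', map_mul]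
    have hz : r * s⁻¹ ≠ 0 := mul_ne_zero hr0 (inv_ne_zero hs0)
    have hne : (χ r * star (χ s)) ^ (Fintype.card F - 1) ≠ 1 := by
      intro h2
      rw [hw, ← map_pow] at h2
      have h3 : (Units.mk0 _ hz) ^ (Fintype.card F - 1) = (1 : Eˣ) := by
        apply hχ
        simpa using h2
      have h4 : (r * s⁻¹) ^ (Fintype.card F - 1) = 1 := by
        simpa using congrArg Units.val h3
      obtain ⟨c, hc⟩ := mem_range_of_pow (F := F) _ hz h4
      have h5 : r = c • s := by
        rw [Algebra.smul_def, hc]; field_simp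
      have h6 : c = 1 := by
        have := congrArg ℓ h5
        rw [map_smul, hr, hs] at this
        simpa using this.symm
      rw [h6, one_smul] at h5
      exact h h5
    have hone : (χ r * star (χ s)) ^ (Fintype.card E - 1) = 1 := by
      rw [hw, ← map_pow, FiniteField.pow_card_sub_one_eq_one _ hz]
      simp
    rw [geom_sum_eq hne, ← pow_mul, hM, hone]
    simp

end chars2

lemma mu_family (Q J : ℕ) (hpp : IsPrimePow Q) (hJ : 1 ≤ J) :
    ∃ (R : Type) (_ : Fintype R) (_ : DecidableEq R)
      (v : Fin (Q - 1) → Fin ((Q ^ J - 1) / (Q - 1)) → R → ℂ),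
      Fintype.card R = Q ^ (J - 1) ∧
      (∀ n m, ∑ r, star (v n m r) * v n m r = 1) ∧
      (∀ n m m', m ≠ m' → ‖∑ r, star (v n m r) * v n m' r‖ ^ 2 = 1 / (Q : ℝ) ^ J) ∧
      (∀ n n' m m', n ≠ n' → ‖∑ r, star (v n m r) * v n' m' r‖ ^ 2 = 1 / (Q : ℝ) ^ (J - 1)) ∧
      (∀ n r s, ∑ m, v n m r * star (v n m s) =
        if r = s then (((Q ^ J - 1) / (Q - 1) : ℕ) : ℂ) / (Q : ℂ) ^ (J - 1) else 0) := by
  classical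
  obtain ⟨p, k, hp, hk, rfl⟩ := hpp
  have hp' : Fact p.Prime := ⟨hp.nat_prime⟩
  have : NeZero J := ⟨by omega⟩
  let F := GaloisField p k
  let E := FiniteField.Extension F p J
  let _ : Fintype F := Fintype.ofFinite F
  let _ : Fintype E := Fintype.ofFinite E
  have hF : Fintype.card F = p ^ k := by
    rw [← Nat.card_eq_fintype_card]; exact GaloisField.card p k hk.ne'
  have hE : Fintype.card E = (p ^ k) ^ J := by
    rw [← hF, ← Nat.card_eq_fintype_card, ← Nat.card_eq_fintype_card]
    exact FiniteField.natCard_extension F p J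
  rw [← hF] at hE ⊢
  generalize hQ : Fintype.card F = Q at *
  have hQ1 : 1 < Q := by rw [← hQ]; exact Fintype.one_lt_card
  obtain ⟨ℓ, hℓ'⟩ := LinearMap.exists_leftInverse_of_injective (Algebra.linearMap F E)
    (LinearMap.ker_eq_bot.2 (algebraMap F E).injective)
  have hℓ : ∀ c, ℓ (algebraMap F E c) = c := fun c => by
    simpa using LinearMap.congr_fun hℓ' c
  obtain ⟨χ, hχ⟩ := exists_inj_char E
  obtain ⟨j, rfl⟩ : ∃ j, J = j + 1 := ⟨J - 1, by omega⟩
  have hK : (Finset.univ.filter (fun x => ℓ x = 1)).card = Q ^ j := by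
    have := fiber_card ℓ hℓ
    rw [hE, hQ, pow_succ] at this
    exact Nat.eq_of_mul_eq_mul_right (by omega) this
  have hM : (Q - 1) * ((Q ^ (j + 1) - 1) / (Q - 1)) = Q ^ (j + 1) - 1 :=
    Nat.mul_div_cancel' (by simpa using Nat.sub_dvd_pow_sub_pow Q 1 (j + 1))
  generalize (Q ^ (j + 1) - 1) / (Q - 1) = M at *
  have hQR : (0 : ℝ) < Q := by exact_mod_cast (by omega : 0 < Q)
  set q : ℝ := Real.sqrt ((Q : ℝ) ^ j) with hq
  have hq2 : q ^ 2 = (Q : ℝ) ^ j := Real.sq_sqrt (by positivity)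
  have hq0 : 0 < q := Real.sqrt_pos.2 (by positivity)
  have hqc : (q : ℂ) ^ 2 = (Q : ℂ) ^ j := by exact_mod_cast hq2
  have hqc0 : (q : ℂ) ≠ 0 := by exact_mod_cast hq0.ne'
  have hsum : ∀ a b : ℕ, ∑ r : {x : E // ℓ x = 1},
      star ((q : ℂ)⁻¹ * χ r.1 ^ a) * ((q : ℂ)⁻¹ * χ r.1 ^ b) =
      ((Q : ℂ) ^ j)⁻¹ * ∑ x ∈ Finset.univ.filter (fun x => ℓ x = 1), star (χ x ^ a) * χ x ^ b := by
    intro a b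
    rw [Finset.mul_sum, ← Finset.sum_subtype_eq_sum_filter]
    refine Finset.sum_congr (by simp) fun x _ => ?_
    rw [star_mul', star_inv₀, ← hqc]
    have : star (q : ℂ) = q := Complex.conj_ofReal q
    rw [this, sq, mul_inv]
    ring
  have hbound : ∀ (n : Fin (Q - 1)) (m : Fin M), (n : ℕ) + (Q - 1) * m < Fintype.card E - 1 := by
    intro n m
    rw [hE, ← hM]
    calc (n : ℕ) + (Q - 1) * m < (Q - 1) + (Q - 1) * m := by have := n.2; omega
      _ = (Q - 1) * (m + 1) := by ring
      _ ≤ (Q - 1) * M := Nat.mul_le_mul_left _ m.2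
  have hER : (Fintype.card E : ℝ) = (Q : ℝ) ^ j * Q := by rw [hE]; push_cast; rw [pow_succ]
  have hnorm : ∀ S : ℂ, ‖((Q : ℂ) ^ j)⁻¹ * S‖ ^ 2 = ‖S‖ ^ 2 / ((Q : ℝ) ^ j) ^ 2 := by
    intro S
    rw [norm_mul, norm_inv, norm_pow, Complex.norm_natCast, mul_pow, inv_pow]
    field_simp
  refine ⟨{x : E // ℓ x = 1}, inferInstance, inferInstance,
    fun n m r => (q : ℂ)⁻¹ * χ r.1 ^ ((n : ℕ) + (Q - 1) * m), ?_, ?_, ?_, ?_, ?_⟩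
  · rw [Fintype.card_subtype, hK]; simp
  · intro n m
    rw [hsum, Finset.sum_congr rfl (g := fun _ => (1 : ℂ))]
    · rw [Finset.sum_const, hK]
      have : (Q : ℂ) ≠ 0 := by exact_mod_cast hQR.ne'
      simp [this]
    · intro x hx
      have hx0 : x ≠ 0 := by rintro rfl; simp at hx
      rw [star_pow, ← mul_pow, mul_comm (star _), chi_star_mul χ x hx0, one_pow]
  · intro n m m' hm
    rw [hsum, hnorm]
    have h := ip_same ℓ hℓ hχ (n := n) (m := m) (m' := m') (by rw [hQ]; exact hbound n m)
      (by rw [hQ]; exact hbound n m') (by rwa [Ne, Fin.val_inj])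
    rw [hER, hQ] at h
    have h' := (eq_div_iff (by positivity)).2 h
    rw [h']
    field_simp
    ring
  · intro n n' m m' hn
    rw [hsum, hnorm]
    have h := ip_diff ℓ hℓ hχ (a := n + (Q - 1) * m) (b := n' + (Q - 1) * m') (by
      rw [hQ, Nat.add_mul_mod_self_left, Nat.add_mul_mod_self_left, Nat.mod_eq_of_lt n.2,
        Nat.mod_eq_of_lt n'.2]
      rwa [Ne, Fin.val_inj])
    rw [hER, hQ] at h
    have h' := (eq_div_iff (by positivity)).2 h
    rw [h', Nat.add_sub_cancel]
    field_simp
  · intro n r s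
    have h := tight_core ℓ hχ n M (by rw [hQ, hE, hM]) r.1 s.1 r.2 s.2
    rw [hQ] at h
    have h2 : ∀ m : Fin M, (q : ℂ)⁻¹ * χ r.1 ^ ((n : ℕ) + (Q - 1) * m) *
        star ((q : ℂ)⁻¹ * χ s.1 ^ ((n : ℕ) + (Q - 1) * m)) = ((Q : ℂ) ^ j)⁻¹ *
        (χ r.1 ^ ((n : ℕ) + (Q - 1) * m) * star (χ s.1 ^ ((n : ℕ) + (Q - 1) * m))) := by
      intro m
      rw [star_mul', star_inv₀, ← hqc]
      have : star (q : ℂ) = q := Complex.conj_ofReal q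
      rw [this, sq, mul_inv]
      ring
    simp_rw [h2]
    rw [← Finset.mul_sum, h, Nat.add_sub_cancel]
    simp only [Subtype.ext_iff, mul_ite, mul_zero]
    split_ifs
    · rw [div_eq_mul_inv, mul_comm]
    · rfl

lemma einner {ι : Type*} [Fintype ι] (x y : EuclideanSpace ℂ ι) :
    inner ℂ x y = ∑ i, star (x i) * y i := by
  rw [PiLp.inner_apply]
  refine Finset.sum_congr rfl fun i _ => ?_
  rw [RCLike.inner_apply, mul_comm]
  rfl

lemma tight_coord {ι κ : Type*} [Fintype ι] [Fintype κ] [DecidableEq κ]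
    (φ : ι → EuclideanSpace ℂ κ) (c : ℂ)
    (h : ∀ y : EuclideanSpace ℂ κ, ∑ n, (inner ℂ (φ n) y : ℂ) • φ n = c • y) (i k : κ) :
    ∑ n, φ n i * star (φ n k) = if i = k then c else 0 := by
  have h1 := congrArg (fun z : EuclideanSpace ℂ κ => z i) (h (EuclideanSpace.single k 1))
  simp only [WithLp.ofLp_sum, Finset.sum_apply, PiLp.smul_apply, smul_eq_mul, einner,
    PiLp.single_apply, mul_ite, mul_one, mul_zero, Finset.sum_ite_eq', Finset.sum_ite_eq,
    Finset.mem_univ, if_true] at h1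
  rw [← h1]
  exact Finset.sum_congr rfl fun n _ => mul_comm _ _

lemma tight_of_coord {ι κ : Type*} [Fintype ι] [Fintype κ] [DecidableEq κ]
    (φ : ι → EuclideanSpace ℂ κ) (c : ℂ)
    (h : ∀ i k, ∑ n, φ n i * star (φ n k) = if i = k then c else 0)
    (y : EuclideanSpace ℂ κ) : ∑ n, (inner ℂ (φ n) y : ℂ) • φ n = c • y := by
  ext i
  simp only [WithLp.ofLp_sum, Finset.sum_apply, PiLp.smul_apply, smul_eq_mul, einner]
  simp_rw [Finset.sum_mul]
  rw [Finset.sum_comm]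
  have : ∀ k, ∑ n, star (φ n k) * y k * φ n i = (if i = k then c else 0) * y k := by
    intro k
    rw [← h, Finset.sum_mul]
    exact Finset.sum_congr rfl fun n _ => by ring
  simp_rw [this]
  simp

/-- if `D < N < 2D`, `N−D` divides `D(N−1)`, `Q = D(N−1)/(N−D)` is a
prime power, and an `ETF(D,N)` exists in `ℂ^D`, then for every `J ≥ 1` there exists an
`ETF(D·Q^{J−1}, N·(Q^J−1)/(Q−1))` in `ℂ^{D·Q^{J−1}}`. -/
theorem stmt14 (D N : ℕ) (h1 : D < N) (h2 : N < 2 * D)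
    (hdvd : (N - D) ∣ D * (N - 1))
    (Q : ℕ) (hQ : Q = D * (N - 1) / (N - D)) (hpp : IsPrimePow Q)
    (hexists : ∃ φ : Fin N → EuclideanSpace ℂ (Fin D), IsETF D N φ) :
    ∀ J : ℕ, 1 ≤ J →
      ∃ ψ : Fin (N * ((Q ^ J - 1) / (Q - 1))) →
          EuclideanSpace ℂ (Fin (D * Q ^ (J - 1))),
        IsETF (D * Q ^ (J - 1)) (N * ((Q ^ J - 1) / (Q - 1))) ψ := by
  intro J hJ
  obtain ⟨φ, hφ1, hφ2, hφ3⟩ := hexists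
  obtain ⟨R, _, _, v, hcard, hv1, hv2, hv3, hv4⟩ := mu_family Q J hpp hJ
  have hQ1 : 1 < Q := hpp.one_lt
  have hM : ((Q ^ J - 1) / (Q - 1)) * (Q - 1) = Q ^ J - 1 :=
    Nat.div_mul_cancel (by simpa using Nat.sub_dvd_pow_sub_pow Q 1 J)
  have hQN : Q * (N - D) = D * (N - 1) := by rw [hQ]; exact Nat.div_mul_cancel hdvd
  obtain ⟨j, rfl⟩ : ∃ j, J = j + 1 := ⟨J - 1, by omega⟩
  simp only [Nat.add_sub_cancel] at *
  generalize (Q ^ (j + 1) - 1) / (Q - 1) = M at *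
  -- real versions
  have hDR : (2 : ℝ) ≤ D := by exact_mod_cast (by omega : 2 ≤ D)
  have hNDR : (D : ℝ) < N := by exact_mod_cast h1
  have hN2R : (N : ℝ) + 1 ≤ 2 * D := by exact_mod_cast h2
  have hQR : (1 : ℝ) < Q := by exact_mod_cast hQ1
  have hQNR : (Q : ℝ) * (N - D) = D * (N - 1) := by
    have := congrArg (Nat.cast : ℕ → ℝ) hQN
    rw [Nat.cast_mul, Nat.cast_mul, Nat.cast_sub h1.le, Nat.cast_sub (by omega)] at this
    simpa using this
  have hMR : (M : ℝ) * (Q - 1) = (Q : ℝ) ^ j * Q - 1 := by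
    have := congrArg (Nat.cast : ℕ → ℝ) hM
    rw [Nat.cast_mul, Nat.cast_sub hQ1.le, Nat.cast_sub (Nat.one_le_pow _ _ (by omega))] at this
    rw [← pow_succ]
    simpa using this
  have hT : (1 : ℝ) ≤ (Q : ℝ) ^ j := one_le_pow₀ hQR.le
  have hM1 : (1 : ℝ) ≤ M := by
    have : (1 : ℝ) * (Q - 1) ≤ M * (Q - 1) := by
      rw [hMR]; nlinarith
    exact le_of_mul_le_mul_right this (by linarith)
  have hNQ : N ≤ Q - 1 := by
    have : (N : ℝ) + 1 ≤ Q := by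
      have h3 : ((N : ℝ) + 1) * (N - D) ≤ Q * (N - D) := by rw [hQNR]; nlinarith
      exact le_of_mul_le_mul_right h3 (by linarith)
    have : N + 1 ≤ Q := by exact_mod_cast this
    omega
  have hcoh : ((N : ℝ) - D) / (D * (N - 1)) = 1 / Q := by
    rw [← hQNR]
    have : (N : ℝ) - D ≠ 0 := by linarith
    field_simp
  have hcoh2 : (((N * M : ℕ) : ℝ) - (D * Q ^ j : ℕ)) / ((D * Q ^ j : ℕ) * (((N * M : ℕ) : ℝ) - 1))
      = 1 / (Q : ℝ) ^ (j + 1) := by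
    push_cast
    have hNM : (1 : ℝ) < N * M := by nlinarith
    have hne : (N : ℝ) * M - 1 ≠ 0 := by linarith
    have hD0 : (D : ℝ) ≠ 0 := by linarith
    have hT0 : (Q : ℝ) ^ j ≠ 0 := by linarith
    rw [pow_succ, div_eq_div_iff (by positivity) (by positivity)]
    generalize (Q : ℝ) ^ j = T at *
    linear_combination T * (M : ℝ) * hQNR + T * (D : ℝ) * hMR
  let e1 : Fin (N * M) ≃ Fin N × Fin M := finProdFinEquiv.symm
  let e2 : Fin (D * Q ^ j) ≃ Fin D × R :=
    finProdFinEquiv.symm.trans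
      (Equiv.prodCongr (Equiv.refl _) (Fintype.equivFinOfCardEq hcard).symm)
  let w : Fin N → Fin (Q - 1) := Fin.castLE hNQ
  have hw : Function.Injective w := Fin.castLE_injective hNQ
  let ψ : Fin (N * M) → EuclideanSpace ℂ (Fin (D * Q ^ j)) := fun a =>
    WithLp.toLp 2 (fun i => φ (e1 a).1 (e2 i).1 * v (w (e1 a).1) (e1 a).2 (e2 i).2)
  have hip : ∀ a b, inner ℂ (ψ a) (ψ b) = inner ℂ (φ (e1 a).1) (φ (e1 b).1) *
      ∑ r, star (v (w (e1 a).1) (e1 a).2 r) * v (w (e1 b).1) (e1 b).2 r := by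
    intro a b
    rw [einner, einner, Finset.sum_mul_sum, ← Finset.sum_product',
      Finset.univ_product_univ, ← e2.sum_comp]
    refine Finset.sum_congr rfl fun i _ => ?_
    simp only [ψ, star_mul']
    ring
  have hself : ∀ n, (inner ℂ (φ n) (φ n) : ℂ) = 1 := fun n => by
    rw [inner_self_eq_norm_sq_to_K, hφ1]; simp
  refine ⟨ψ, ?_, ?_, ?_⟩
  · intro a
    have h : (inner ℂ (ψ a) (ψ a) : ℂ) = 1 := by rw [hip, hself, hv1, one_mul]
    rw [inner_self_eq_norm_sq_to_K] at h
    have h5 : ‖ψ a‖ ^ 2 = 1 := by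
      apply Complex.ofReal_injective
      rw [Complex.ofReal_pow, Complex.ofReal_one]
      exact h
    exact (pow_eq_one_iff_of_nonneg (norm_nonneg _) two_ne_zero).1 h5
  · intro a b hab
    rw [hcoh2, hip, norm_mul, mul_pow]
    by_cases hn : (e1 a).1 = (e1 b).1
    · have hm : (e1 a).2 ≠ (e1 b).2 := fun hm => hab (e1.injective (Prod.ext hn hm))
      rw [hn, hself, hv2 _ _ _ hm]
      simp
    · rw [hφ2 _ _ hn, hv3 _ _ _ _ (fun h => hn (hw h)), hcoh, pow_succ]
      field_simp
  · refine tight_of_coord ψ _ fun i k => ?_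
    have hφ4 := tight_coord φ _ hφ3
    have h3 : ∑ a, ψ a i * star (ψ a k) = ∑ n : Fin N, ∑ m : Fin M,
        (φ n (e2 i).1 * star (φ n (e2 k).1)) *
          (v (w n) m (e2 i).2 * star (v (w n) m (e2 k).2)) := by
      rw [← Finset.sum_product', Finset.univ_product_univ, ← e1.sum_comp]
      refine Finset.sum_congr rfl fun a _ => ?_
      simp only [ψ, star_mul']
      ring
    rw [h3]
    simp_rw [← Finset.mul_sum, hv4]
    rw [← Finset.sum_mul, hφ4]
    by_cases hik : i = k
    · subst hik
      simp only [if_true]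
      push_cast
      rw [div_mul_div_comm]
    · rw [if_neg hik]
      by_cases hx : (e2 i).1 = (e2 k).1
      · have : (e2 i).2 ≠ (e2 k).2 := fun hm => hik (e2.injective (Prod.ext hx hm))
        rw [if_neg this, mul_zero]
      · rw [if_neg hx, zero_mul]
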